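/- Let q be an integer with q ≥ 4 and let A be a subset of {0, 1, …, ⌊q/2⌋ − 1} with #A ≥ 2. Then for every integer p ≥ 2 with gcd(p,q) = 1, there is a uniform finite upper bound on #((D_p + α) ∩ K(q,A)) over all real numbers α. -/

import Mathlib

open MeasureTheory

/-- The self-similar set `K(q,A) = { ∑_{i=1}^∞ a_i/q^i : a_i ∈ A }`. -/
noncomputable def Kset (q : ℕ) (A : Finset ℚ) : Set ℝ :=
  { x : ℝ | ∃ a : ℕ → ℚ, (∀ i, a i ∈ A) ∧ x = ∑' i : ℕ, (a i : ℝ) / (q : ℝ) ^ (i + 1) }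

/-- The set `D_p = ⋃_{n≥1} ℤ/pⁿ` of rationals with a finite `p`-ary expansion. -/
def Dset (p : ℕ) : Set ℝ :=
  { x : ℝ | ∃ n : ℕ, 1 ≤ n ∧ ∃ m : ℤ, x = (m : ℝ) / (p : ℝ) ^ n }

/-!
Let `x = ∑ bᵢ / q ^ (i + 1)` have digits in a finite set `B` of fewer than `q` integers, and
suppose that the denominator `N` of `x` divides a power of `p`. The tail of the expansion starting
at place `s` is a rational `u / N`, bounded independently of `x`, with `u ≡ qˢ · num x` modulo
`N`. Two tails sharing their first `k` digits differ by `O(q⁻ᵏ)`, while distinct ones differ by at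
least `1 / N`, so they are equal once `qᵏ` exceeds a constant times `N`. Hence the powers of `q`
modulo `N` are separated by digit words of length `k`, and the order of `q` modulo `N` is at most
`|B|ᵏ`, of the size of a power of `N` with exponent less than `1`. On the other hand, lifting the
exponent bounds this order below by a fixed positive multiple of `N`. So `N` is bounded, and there
are finitely many such `x`. If `#(A - A) < q`, apply this to `B = A - A`, after clearing the
denominators of the digits: differences of points of `(D_p + α) ∩ K(q, A)` lie in the finite set
`D_p ∩ K(q, A - A)`, which does not depend on `α`.
-/

theorem emultiplicity_pow_sub_one {l : ℕ} (hl : l.Prime) {g : ℤ} (hg : (l : ℤ) ^ 2 ∣ g - 1)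
    (t : ℕ) : emultiplicity (l : ℤ) (g ^ t - 1) = emultiplicity (l : ℤ) ((g - 1) * t) := by
  have hl' : Prime (l : ℤ) := Nat.prime_iff_prime_int.1 hl
  have hl1 : (l : ℤ) ∣ g - 1 := (dvd_pow_self _ two_ne_zero).trans hg
  have hlg : ¬ (l : ℤ) ∣ g := fun h ↦ hl'.not_dvd_one (by simpa using dvd_sub h hl1)
  rw [emultiplicity_mul hl']
  rcases hl.eq_two_or_odd' with rfl | hodd
  · simpa using Int.two_pow_sub_pow' (y := 1) t (by simpa using hg) hlg
  · simpa [Int.natCast_emultiplicity] using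
      Int.emultiplicity_pow_sub_pow hl hodd (y := 1) hl1 hlg t

theorem dvd_sub_one_mul_of_dvd_pow_sub_one {N t : ℕ} {g : ℤ}
    (hg : ∀ l : ℕ, l.Prime → l ∣ N → (l : ℤ) ^ 2 ∣ g - 1) (h : (N : ℤ) ∣ g ^ t - 1) :
    (N : ℤ) ∣ (g - 1) * t := by
  rw [Int.natCast_dvd, Nat.dvd_iff_prime_pow_dvd_dvd]
  intro l k hl hlk
  rcases eq_or_ne k 0 with rfl | hk
  · simp
  have hlN : l ∣ N := (dvd_pow_self l hk).trans hlk
  have hpow : (l : ℤ) ^ k ∣ g ^ t - 1 := dvd_trans (mod_cast hlk) h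
  rw [← Int.natCast_dvd, Nat.cast_pow, pow_dvd_iff_le_emultiplicity,
    ← emultiplicity_pow_sub_one hl (hg l hl hlN), ← pow_dvd_iff_le_emultiplicity]
  exact hpow

theorem exists_le_mul_orderOf_of_dvd_pow {p q : ℕ} (hq : 1 < q) (hpq : p.Coprime q) :
    ∃ c : ℕ, ∀ N n : ℕ, N ∣ p ^ n → N ≤ c * orderOf (q : ZMod N) := by
  have hp : 0 < p := Nat.pos_of_ne_zero fun h ↦ by simp_all
  set g := q ^ (p ^ 2).totient with hg
  have hg1 : 1 < g := Nat.one_lt_pow (Nat.totient_pos.2 (pow_pos hp 2)).ne' hq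
  have hpg : (p : ℤ) ^ 2 ∣ (g : ℤ) - 1 := by
    simpa [hg] using (Nat.ModEq.pow_totient (hpq.symm.pow_right 2)).symm.dvd
  refine ⟨g - 1, fun N n hN ↦ ?_⟩
  set t := orderOf (q : ZMod N)
  have ht : 0 < t := by
    have : NeZero N := ⟨ne_zero_of_dvd_ne_zero (pow_pos hp n).ne' hN⟩
    have hu : IsUnit (q : ZMod N) :=
      (ZMod.isUnit_iff_coprime q N).2 (Nat.Coprime.coprime_dvd_right hN (hpq.symm.pow_right n))
    exact hu.isOfFinOrder.orderOf_pos
  have hgt : (N : ℤ) ∣ (g : ℤ) ^ t - 1 := by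
    rw [← ZMod.intCast_zmod_eq_zero_iff_dvd]
    have hqt : (q : ZMod N) ^ t = 1 := pow_orderOf_eq_one _
    push_cast [hg]
    rw [pow_right_comm, hqt, one_pow, sub_self]
  have hdvd : (N : ℤ) ∣ ((g : ℤ) - 1) * t := by
    refine dvd_sub_one_mul_of_dvd_pow_sub_one (fun l hl hlN ↦ dvd_trans ?_ hpg) hgt
    exact pow_dvd_pow_of_dvd (Int.natCast_dvd_natCast.2 (hl.dvd_of_dvd_pow (hlN.trans hN))) 2
  rw [← Nat.cast_pred hg1.le, ← Nat.cast_mul, Int.natCast_dvd_natCast] at hdvd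
  exact Nat.le_of_dvd (Nat.mul_pos (Nat.sub_pos_of_lt hg1) ht) hdvd

theorem exists_forall_le_of_forall_lt_pow {q r : ℕ} (hq : 1 < q) (hr : r < q) (c : ℕ) :
    ∃ Y : ℕ, ∀ y : ℕ, (∀ k, y < q ^ k → y ≤ c * r ^ k) → y ≤ Y := by
  obtain ⟨k₀, hk₀⟩ : ∃ k₀, ∀ k ≥ k₀, c * r ^ (k + 1) < q ^ k := by
    have hsmall := ((isLittleO_pow_pow_of_lt_left r.cast_nonneg
      (Nat.cast_lt.2 hr)).const_mul_left (c * r : ℝ)).bound one_half_pos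
    obtain ⟨k₀, hk₀⟩ := Filter.eventually_atTop.1 hsmall
    refine ⟨k₀, fun k hk ↦ ?_⟩
    have hle := hk₀ k hk
    rw [Real.norm_of_nonneg (by positivity), Real.norm_of_nonneg (by positivity)] at hle
    have hqk : (0 : ℝ) < (q : ℝ) ^ k := by positivity
    have hlt : (c : ℝ) * r ^ (k + 1) < q ^ k := by
      rw [pow_succ']
      linarith
    exact_mod_cast hlt
  refine ⟨q ^ k₀, fun y hy ↦ ?_⟩
  by_contra! hlt
  have hk : k₀ ≤ Nat.log q y := Nat.le_log_of_pow_le hq hlt.le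
  have hle : q ^ Nat.log q y ≤ y := Nat.pow_log_le_self q (Nat.ne_zero_of_lt hlt)
  exact (hle.trans (hy _ (Nat.lt_pow_succ_log_self hq y))).not_gt (hk₀ _ hk)

theorem finite_setOf_den_le_abs_le (N C : ℕ) : {x : ℚ | x.den ≤ N ∧ |x| ≤ C}.Finite := by
  refine Set.Finite.of_injOn (f := fun x : ℚ ↦ (x.num, x.den))
    (t := Set.Icc (-(C * N : ℤ)) (C * N) ×ˢ Set.Iic N) ?_ ?_
    ((Set.finite_Icc _ _).prod (Set.finite_Iic N))
  · rintro x ⟨hden, habs⟩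
    have hnum : |x.num| ≤ (C * N : ℤ) := by
      have : |(x.num : ℚ)| ≤ C * N := by
        rw [← Rat.mul_den_eq_num, abs_mul, Nat.abs_cast]
        gcongr
      exact_mod_cast this
    exact ⟨abs_le.1 hnum, hden⟩
  · rintro x - y - hxy
    exact Rat.ext (congrArg Prod.fst hxy) (congrArg Prod.snd hxy)

/-- The value `0.a₀a₁a₂…` in base `q` of a sequence of real digits, so that `Kset q A` is the set of
values of the sequences in `A`. As in `Kset`, the digit of index `i` has weight `q⁻⁽ⁱ⁺¹⁾`. -/
noncomputable def radixSum (q : ℕ) (a : ℕ → ℝ) : ℝ :=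
  ∑' i, a i / (q : ℝ) ^ (i + 1)

section RadixSum

variable {q : ℕ} {a b : ℕ → ℝ} {C : ℝ}

theorem hasSum_const_div_pow_succ (hq : 1 < q) (C : ℝ) :
    HasSum (fun i : ℕ ↦ C / (q : ℝ) ^ (i + 1)) (C / (q - 1)) := by
  have hq' : (1 : ℝ) < q := mod_cast hq
  have hterm (i : ℕ) : C / q * (q : ℝ)⁻¹ ^ i = C / (q : ℝ) ^ (i + 1) := by
    rw [inv_pow, pow_succ']
    field_simp
  have hvalue : C / q * (1 - (q : ℝ)⁻¹)⁻¹ = C / (q - 1) := by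
    have : (q : ℝ) - 1 ≠ 0 := sub_ne_zero.2 hq'.ne'
    field_simp
  simpa only [hterm, hvalue] using
    (hasSum_geometric_of_lt_one (by positivity) (inv_lt_one_of_one_lt₀ hq')).mul_left (C / q : ℝ)

theorem norm_div_pow_le (ha : ∀ i, |a i| ≤ C) (i : ℕ) :
    ‖a i / (q : ℝ) ^ (i + 1)‖ ≤ C / (q : ℝ) ^ (i + 1) := by
  rw [norm_div, norm_pow, Real.norm_natCast, Real.norm_eq_abs]
  gcongr
  exact ha i

theorem summable_div_pow_succ (hq : 1 < q) (ha : ∀ i, |a i| ≤ C) :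
    Summable fun i ↦ a i / (q : ℝ) ^ (i + 1) :=
  .of_norm_bounded (hasSum_const_div_pow_succ hq C).summable (norm_div_pow_le ha)

theorem abs_radixSum_le (hq : 1 < q) (ha : ∀ i, |a i| ≤ C) : |radixSum q a| ≤ C := by
  have hq' : (1 : ℝ) ≤ q - 1 := by
    have : (2 : ℝ) ≤ q := mod_cast hq
    linarith
  exact (tsum_of_norm_bounded (hasSum_const_div_pow_succ hq C) (norm_div_pow_le ha)).trans
    (div_le_self ((abs_nonneg _).trans (ha 0)) hq')

theorem radixSum_sub (hq : 1 < q) {C' : ℝ} (ha : ∀ i, |a i| ≤ C) (hb : ∀ i, |b i| ≤ C') :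
    radixSum q (fun i ↦ a i - b i) = radixSum q a - radixSum q b := by
  simp only [radixSum, sub_div]
  exact (summable_div_pow_succ hq ha).tsum_sub (summable_div_pow_succ hq hb)

theorem radixSum_const_mul (c : ℝ) : radixSum q (fun i ↦ c * a i) = c * radixSum q a := by
  simp only [radixSum, mul_div_assoc, tsum_mul_left]

theorem pow_mul_radixSum (hq : 1 < q) (ha : ∀ i, |a i| ≤ C) (k : ℕ) :
    (q : ℝ) ^ k * radixSum q a =
      ∑ i ∈ Finset.range k, a i * (q : ℝ) ^ (k - 1 - i) + radixSum q (fun i ↦ a (i + k)) := by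
  rw [radixSum, ← (summable_div_pow_succ hq ha).sum_add_tsum_nat_add k, mul_add, Finset.mul_sum,
    ← tsum_mul_left]
  congr 1
  · refine Finset.sum_congr rfl fun i hi ↦ ?_
    have hk : k = k - 1 - i + (i + 1) := by have := Finset.mem_range.1 hi; omega
    nth_rewrite 1 [hk]
    rw [pow_add]
    field_simp
  · refine tsum_congr fun i ↦ ?_
    rw [add_right_comm, pow_add _ (i + 1) k]
    field_simp

theorem pow_mul_abs_radixSum_sub_le (hq : 1 < q) (ha : ∀ i, |a i| ≤ C) (hb : ∀ i, |b i| ≤ C)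
    {k : ℕ} (hab : ∀ i < k, a i = b i) :
    (q : ℝ) ^ k * |radixSum q a - radixSum q b| ≤ 2 * C := by
  have hsum : ∑ i ∈ Finset.range k, a i * (q : ℝ) ^ (k - 1 - i) =
      ∑ i ∈ Finset.range k, b i * (q : ℝ) ^ (k - 1 - i) :=
    Finset.sum_congr rfl fun i hi ↦ by rw [hab i (Finset.mem_range.1 hi)]
  calc (q : ℝ) ^ k * |radixSum q a - radixSum q b|
      = |(q : ℝ) ^ k * radixSum q a - (q : ℝ) ^ k * radixSum q b| := by
        rw [← mul_sub, abs_mul, abs_of_nonneg (by positivity : (0 : ℝ) ≤ (q : ℝ) ^ k)]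
    _ = |radixSum q (fun i ↦ a (i + k)) - radixSum q (fun i ↦ b (i + k))| := by
        rw [pow_mul_radixSum hq ha k, pow_mul_radixSum hq hb k, hsum, add_sub_add_left_eq_sub]
    _ ≤ C + C := (abs_sub _ _).trans
        (add_le_add (abs_radixSum_le hq fun i ↦ ha (i + k)) (abs_radixSum_le hq fun i ↦ hb (i + k)))
    _ = 2 * C := (two_mul C).symm

end RadixSum

section RationalValue

variable {q C : ℕ} {b : ℕ → ℤ} {x : ℚ}

theorem exists_int_eq_den_mul_radixSum_tail (hq : 1 < q) (hb : ∀ i, |b i| ≤ C)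
    (hx : radixSum q (fun i ↦ b i) = x) (s : ℕ) :
    ∃ u : ℤ, (x.den : ℝ) * radixSum q (fun i ↦ b (i + s)) = u ∧
      (u : ZMod x.den) = q ^ s * x.num := by
  set z : ℤ := ∑ i ∈ Finset.range s, b i * (q : ℤ) ^ (s - 1 - i) with hz
  have htail : (q : ℝ) ^ s * x = z + radixSum q (fun i ↦ b (i + s)) := by
    rw [← hx, pow_mul_radixSum hq (C := C) (fun i ↦ mod_cast hb i) s, hz]
    push_cast
    rfl
  have hnum : (x.den : ℝ) * x = x.num := mod_cast Rat.den_mul_eq_num x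
  refine ⟨q ^ s * x.num - x.den * z, ?_, by simp⟩
  push_cast
  linear_combination (-(x.den : ℝ)) * htail + (q : ℝ) ^ s * hnum

theorem natCast_pow_eq_of_digits_eq (hq : 1 < q) (hb : ∀ i, |b i| ≤ C)
    (hx : radixSum q (fun i ↦ b i) = x) {k s t : ℕ} (hk : 2 * C * x.den < q ^ k)
    (hst : ∀ i < k, b (i + s) = b (i + t)) : (q : ZMod x.den) ^ s = q ^ t := by
  obtain ⟨u, hu, hus⟩ := exists_int_eq_den_mul_radixSum_tail hq hb hx s
  obtain ⟨v, hv, hvt⟩ := exists_int_eq_den_mul_radixSum_tail hq hb hx t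
  have huv : u = v := by
    have hclose := pow_mul_abs_radixSum_sub_le (k := k) (C := C) hq
      (a := fun i ↦ b (i + s)) (b := fun i ↦ b (i + t)) (fun i ↦ mod_cast hb (i + s))
      (fun i ↦ mod_cast hb (i + t)) (fun i hi ↦ by rw [hst i hi])
    have habs : (q : ℝ) ^ k * |(u : ℝ) - v| < (q : ℝ) ^ k * 1 :=
      calc (q : ℝ) ^ k * |(u : ℝ) - v|
          = (q : ℝ) ^ k * |radixSum q (fun i ↦ b (i + s)) - radixSum q (fun i ↦ b (i + t))|
              * x.den := by rw [← hu, ← hv, ← mul_sub, abs_mul, Nat.abs_cast]; ring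
        _ ≤ 2 * C * x.den := by gcongr
        _ < (q : ℝ) ^ k * 1 := by rw [mul_one]; exact_mod_cast hk
    have hlt : |u - v| < 1 := by exact_mod_cast lt_of_mul_lt_mul_left habs (by positivity)
    exact sub_eq_zero.1 (Int.abs_lt_one_iff.1 hlt)
  have hunit : IsUnit (x.num : ZMod x.den) :=
    (ZMod.coe_int_isUnit_iff_isCoprime _ _).2 (Rat.isCoprime_num_den x).symm
  exact hunit.mul_right_cancel (by rw [← hus, ← hvt, huv])

theorem orderOf_natCast_le_card_pow (hq : 1 < q) {B : Finset ℤ} (hbB : ∀ i, b i ∈ B)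
    (hb : ∀ i, |b i| ≤ C) (hx : radixSum q (fun i ↦ b i) = x) {k : ℕ}
    (hk : 2 * C * x.den < q ^ k) : orderOf (q : ZMod x.den) ≤ B.card ^ k := by
  have hcard := Finset.card_le_card_of_injOn (s := Finset.range (orderOf (q : ZMod x.den)))
    (t := Fintype.piFinset fun _ : Fin k ↦ B) (fun s i ↦ b (i + s))
    (fun s _ ↦ by simp [hbB]) fun s hs t ht hst ↦
      pow_injOn_Iio_orderOf (by simpa using hs) (by simpa using ht) <|
        natCast_pow_eq_of_digits_eq hq hb hx hk fun i hi ↦ congrFun hst ⟨i, hi⟩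
  simpa using hcard

end RationalValue

section Finiteness

variable {p q : ℕ}

theorem exists_forall_den_le (hq : 1 < q) (hpq : p.Coprime q) {B : Finset ℤ} (hB : B.card < q)
    {C : ℕ} (hC : ∀ b ∈ B, |b| ≤ C) :
    ∃ N : ℕ, ∀ b : ℕ → ℤ, (∀ i, b i ∈ B) → ∀ x : ℚ, radixSum q (fun i ↦ b i) = x →
      ∀ n : ℕ, x.den ∣ p ^ n → x.den ≤ N := by
  obtain ⟨c, hc⟩ := exists_le_mul_orderOf_of_dvd_pow hq hpq
  obtain ⟨Y, hY⟩ := exists_forall_le_of_forall_lt_pow hq hB ((2 * C + 1) * c)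
  refine ⟨Y, fun b hb x hx n hn ↦ (Nat.le_mul_of_pos_left _ (2 * C).succ_pos).trans (hY _ ?_)⟩
  intro k hk
  have hk' : 2 * C * x.den < q ^ k := lt_of_le_of_lt (by gcongr; omega) hk
  have horder := orderOf_natCast_le_card_pow hq hb (fun i ↦ hC _ (hb i)) hx hk'
  calc (2 * C + 1) * x.den
      ≤ (2 * C + 1) * (c * orderOf (q : ZMod x.den)) := by gcongr; exact hc _ n hn
    _ ≤ (2 * C + 1) * (c * B.card ^ k) := by gcongr
    _ = (2 * C + 1) * c * B.card ^ k := (mul_assoc _ _ _).symm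

theorem exists_rat_of_mem_Dset {x : ℝ} (hx : x ∈ Dset p) :
    ∃ (y : ℚ) (n : ℕ), (y : ℝ) = x ∧ y.den ∣ p ^ n := by
  obtain ⟨n, -, m, rfl⟩ := hx
  refine ⟨Rat.divInt m (p ^ n : ℕ), n, ?_, mod_cast Rat.den_dvd m (p ^ n : ℕ)⟩
  rw [Rat.divInt_eq_div]
  push_cast
  rfl

theorem intCast_mul_mem_Dset (c : ℤ) {x : ℝ} (hx : x ∈ Dset p) : c * x ∈ Dset p := by
  obtain ⟨n, hn, m, rfl⟩ := hx
  exact ⟨n, hn, c * m, by push_cast; ring⟩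

theorem sub_mem_Dset (hp : p ≠ 0) {x y : ℝ} (hx : x ∈ Dset p) (hy : y ∈ Dset p) :
    x - y ∈ Dset p := by
  obtain ⟨n, hn, m, rfl⟩ := hx
  obtain ⟨n', -, m', rfl⟩ := hy
  refine ⟨n + n', by omega, m * p ^ n' - m' * p ^ n, ?_⟩
  push_cast
  rw [pow_add]
  field_simp

theorem finite_Dset_inter_radixSum (hq : 1 < q) (hpq : p.Coprime q) {B : Finset ℤ}
    (hB : B.card < q) :
    {x ∈ Dset p | ∃ b : ℕ → ℤ, (∀ i, b i ∈ B) ∧ x = radixSum q (fun i ↦ b i)}.Finite := by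
  have hC : ∀ b ∈ B, |b| ≤ (B.sup Int.natAbs : ℕ) := fun b hb ↦ by
    rw [Int.abs_eq_natAbs]
    exact_mod_cast Finset.le_sup (f := Int.natAbs) hb
  obtain ⟨N, hN⟩ := exists_forall_den_le hq hpq hB hC
  refine ((finite_setOf_den_le_abs_le N (B.sup Int.natAbs)).image ((↑) : ℚ → ℝ)).subset ?_
  rintro _ ⟨hxD, b, hb, rfl⟩
  obtain ⟨y, n, hy, hn⟩ := exists_rat_of_mem_Dset hxD
  have habs : |(y : ℝ)| ≤ (B.sup Int.natAbs : ℕ) :=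
    hy ▸ abs_radixSum_le hq fun i ↦ mod_cast hC _ (hb i)
  exact ⟨y, ⟨hN b hb y hy.symm n hn, mod_cast habs⟩, hy⟩

theorem finite_Dset_inter_Kset (hq : 1 < q) (hpq : p.Coprime q) {B : Finset ℚ}
    (hB : B.card < q) : (Dset p ∩ Kset q B).Finite := by
  obtain ⟨⟨L, hL⟩, hint⟩ :=
    IsLocalization.exist_integer_multiples_of_finset (nonZeroDivisors ℤ) B
  have hL0 : (L : ℝ) ≠ 0 := mod_cast nonZeroDivisors.ne_zero hL
  have hscale : ∀ a ∈ B, (((L * a).num : ℤ) : ℝ) = L * a := fun a ha ↦ by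
    obtain ⟨z, hz⟩ := hint a ha
    have hz' : (z : ℚ) = L * a := by simpa using hz
    rw [← hz', Rat.num_intCast]
    exact_mod_cast hz'
  refine Set.Finite.of_injOn (f := fun x : ℝ ↦ L * x) ?_ (mul_right_injective₀ hL0).injOn
    (finite_Dset_inter_radixSum hq hpq (B := B.image fun a : ℚ ↦ (L * a).num)
      (Finset.card_image_le.trans_lt hB))
  rintro _ ⟨hxD, a, ha, rfl⟩
  refine ⟨intCast_mul_mem_Dset L hxD, fun i ↦ (L * a i).num,
    fun i ↦ Finset.mem_image_of_mem _ (ha i), ?_⟩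
  simp only [hscale _ (ha _), radixSum_const_mul]
  rfl

end Finiteness

section DifferenceSet

open scoped Pointwise

theorem sub_mem_Kset {q : ℕ} (hq : 1 < q) {A B : Finset ℚ} {x y : ℝ} (hx : x ∈ Kset q A)
    (hy : y ∈ Kset q B) : x - y ∈ Kset q (A - B) := by
  obtain ⟨a, ha, rfl⟩ := hx
  obtain ⟨b, hb, rfl⟩ := hy
  have hbound (S : Finset ℚ) : ∃ C : ℝ, ∀ s ∈ S, |(s : ℝ)| ≤ C := by
    obtain ⟨C, hC⟩ := (S.image fun s : ℚ ↦ |(s : ℝ)|).exists_le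
    exact ⟨C, fun s hs ↦ hC _ (Finset.mem_image_of_mem _ hs)⟩
  obtain ⟨C, hC⟩ := hbound A
  obtain ⟨C', hC'⟩ := hbound B
  refine ⟨fun i ↦ a i - b i, fun i ↦ Finset.sub_mem_sub (ha i) (hb i), ?_⟩
  push_cast
  exact (radixSum_sub hq (fun i ↦ hC _ (ha i)) fun i ↦ hC' _ (hb i)).symm

theorem card_sub_self_le {A : Finset ℚ} {m : ℕ} (hA : ∀ a ∈ A, ∃ k : ℕ, k < m ∧ a = k) :
    (A - A).card ≤ 2 * m - 1 := by
  have hsub : A - A ⊆ (Finset.Ioo (-m : ℤ) m).image ((↑) : ℤ → ℚ) := by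
    intro d hd
    obtain ⟨a, ha, b, hb, rfl⟩ := Finset.mem_sub.1 hd
    obtain ⟨k, hk, rfl⟩ := hA a ha
    obtain ⟨l, hl, rfl⟩ := hA b hb
    exact Finset.mem_image.2 ⟨k - l, Finset.mem_Ioo.2 (by omega), by push_cast; rfl⟩
  refine (Finset.card_le_card hsub).trans (Finset.card_image_le.trans ?_)
  rw [Int.card_Ioo]
  omega

theorem uniform_bound_of_small_digits_general {p q : ℕ} (hq : 1 < q) (hpq : p.Coprime q)
    {A : Finset ℚ} (hA : (A - A).card < q) :
    ∃ M : ℕ, ∀ α : ℝ,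
      (((fun x : ℝ => x + α) '' Dset p) ∩ Kset q A).Finite ∧
      (((fun x : ℝ => x + α) '' Dset p) ∩ Kset q A).ncard ≤ M := by
  have hp : p ≠ 0 := fun h ↦ by simp_all
  have hfin := finite_Dset_inter_Kset hq hpq hA
  refine ⟨(Dset p ∩ Kset q (A - A)).ncard, fun α ↦ ?_⟩
  set S := ((fun x : ℝ => x + α) '' Dset p) ∩ Kset q A
  rcases S.eq_empty_or_nonempty with hempty | ⟨_, ⟨y₀, hy₀, rfl⟩, hK₀⟩
  · simp [hempty]
  have hmaps : Set.MapsTo (fun x ↦ x - (y₀ + α)) S (Dset p ∩ Kset q (A - A)) := by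
    rintro _ ⟨⟨y, hy, rfl⟩, hK⟩
    exact ⟨by simpa using sub_mem_Dset hp hy hy₀, sub_mem_Kset hq hK hK₀⟩
  have hinj : Set.InjOn (fun x ↦ x - (y₀ + α)) S := sub_left_injective.injOn
  exact ⟨.of_injOn hmaps hinj hfin, Set.ncard_le_ncard_of_injOn _ hmaps hinj hfin⟩

end DifferenceSet

theorem uniform_bound_of_small_digits (q : ℕ) (hq : 4 ≤ q)
    (A : Finset ℚ) (hA : 2 ≤ A.card)
    (hdigits : ∀ a ∈ A, ∃ k : ℕ, k < q / 2 ∧ a = (k : ℚ))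
    (p : ℕ) (hp : 2 ≤ p) (hpq : Nat.Coprime p q) :
    ∃ M : ℕ, ∀ α : ℝ,
      (((fun x : ℝ => x + α) '' Dset p) ∩ Kset q A).Finite ∧
      (((fun x : ℝ => x + α) '' Dset p) ∩ Kset q A).ncard ≤ M := by
  exact uniform_bound_of_small_digits_general (by omega) hpq
    ((card_sub_self_le hdigits).trans_lt (by omega))
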